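/- For every k ≥ 1 there exists an unsatisfiable hitting clause-set F with deficiency δ(F) = k and with exactly S₂(k) full clauses; consequently S₂(k) ≤ max{nfc(F) : F unsatisfiable hitting, δ(F) = k}. -/

import Mathlib

/-- The Smarandache primitive number `S₂(k)`: the least `n` such that `2^k` divides `n!`. -/
noncomputable def S2 (k : ℕ) : ℕ := sInf {n : ℕ | 2 ^ k ∣ Nat.factorial n}

/-- A clause: a finite set of nonzero integers (literals) that is clash-free. -/
def IsClause (C : Finset ℤ) : Prop := (0 : ℤ) ∉ C ∧ ∀ x ∈ C, -x ∉ C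

/-- A clause-set: a finite set of clauses. -/
def IsClauseSet (F : Finset (Finset ℤ)) : Prop := ∀ C ∈ F, IsClause C

/-- The variables of a clause: the absolute values of its literals. -/
def clauseVar (C : Finset ℤ) : Finset ℕ := C.image Int.natAbs

/-- The variables of a clause-set. -/
def var (F : Finset (Finset ℤ)) : Finset ℕ := F.biUnion clauseVar

/-- The number of variables `n(F)`. -/
def numVar (F : Finset (Finset ℤ)) : ℕ := (var F).card

/-- The deficiency `δ(F) = c(F) - n(F)`. -/
def deficiency (F : Finset (Finset ℤ)) : ℤ := (F.card : ℤ) - (numVar F : ℤ)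

/-- `F` is satisfiable iff some clause `C` intersects every clause of `F`. -/
def Satisfiable (F : Finset (Finset ℤ)) : Prop :=
  ∃ C : Finset ℤ, IsClause C ∧ ∀ D ∈ F, (C ∩ D).Nonempty

/-- `F` is hitting iff any two distinct clauses of `F` clash. -/
def Hitting (F : Finset (Finset ℤ)) : Prop :=
  ∀ C ∈ F, ∀ D ∈ F, C ≠ D → ∃ x ∈ C, -x ∈ D

/-- `F` is minimally unsatisfiable. -/
def MinUnsat (F : Finset (Finset ℤ)) : Prop :=
  ¬ Satisfiable F ∧ ∀ G ⊂ F, Satisfiable G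

/-- The number of full clauses of `F`. -/
def nfc (F : Finset (Finset ℤ)) : ℕ :=
  (F.filter (fun C => clauseVar C = var F)).card

/-- The degree of a variable `v` in `F`. -/
def vdeg (F : Finset (Finset ℤ)) (v : ℕ) : ℕ :=
  (F.filter (fun C => v ∈ clauseVar C)).card

/-- The minimal variable-degree of `F` (for `n(F) > 0`). -/
noncomputable def minVarDeg (F : Finset (Finset ℤ)) : ℕ :=
  sInf {d : ℕ | ∃ v ∈ var F, vdeg F v = d}

/-- Replace every clause `D` in `S` by the two clauses `D ∪ {v}` and `D ∪ {-v}`. -/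
def splitOn (F S : Finset (Finset ℤ)) (v : ℤ) : Finset (Finset ℤ) :=
  (F \ S) ∪ (S.image (insert v) ∪ S.image (insert (-v)))

theorem mem_splitOn {F S : Finset (Finset ℤ)} {v : ℤ} {D : Finset ℤ} :
    D ∈ splitOn F S v ↔
      (D ∈ F ∧ D ∉ S) ∨ (∃ A ∈ S, insert v A = D) ∨ (∃ A ∈ S, insert (-v) A = D) := by
  simp [splitOn]

theorem mem_clauseVar {C : Finset ℤ} {n : ℕ} :
    n ∈ clauseVar C ↔ (n : ℤ) ∈ C ∨ -(n : ℤ) ∈ C := by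
  simp only [clauseVar, Finset.mem_image]
  constructor
  · rintro ⟨x, hx, rfl⟩
    rcases Int.natAbs_eq x with h | h
    · left; rwa [← h]
    · right; rwa [← h]
  · rintro (h | h)
    · exact ⟨_, h, by simp⟩
    · exact ⟨_, h, by simp⟩

theorem natAbs_mem_clauseVar {C : Finset ℤ} {x : ℤ} :
    x.natAbs ∈ clauseVar C ↔ x ∈ C ∨ -x ∈ C := by
  rw [mem_clauseVar]
  rcases Int.natAbs_eq x with h | h
  · rw [← h]
  · rw [show (x.natAbs : ℤ) = -x by omega, neg_neg, or_comm]

theorem mem_var {F : Finset (Finset ℤ)} {n : ℕ} : n ∈ var F ↔ ∃ C ∈ F, n ∈ clauseVar C := by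
  simp [var]

theorem clauseVar_insert (x : ℤ) (C : Finset ℤ) :
    clauseVar (insert x C) = insert x.natAbs (clauseVar C) := by
  simp [clauseVar]

theorem IsClause.card_clauseVar {C : Finset ℤ} (hC : IsClause C) :
    (clauseVar C).card = C.card := by
  refine Finset.card_image_of_injOn fun x hx y hy h => ?_
  rcases Int.natAbs_eq_natAbs_iff.1 h with h | h
  · exact h
  · subst h
    exact absurd hx (hC.2 y hy)

section Split

variable {F S : Finset (Finset ℤ)} {v : ℕ}

theorem not_mem_of_fresh (hv : v ∉ var F) {D : Finset ℤ} (hD : D ∈ F) :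
    (v : ℤ) ∉ D ∧ -(v : ℤ) ∉ D := by
  have h : v ∉ clauseVar D := fun h => hv (mem_var.2 ⟨D, hD, h⟩)
  rw [mem_clauseVar] at h
  tauto

theorem IsClause.insert_of_notMem {D : Finset ℤ} {x : ℤ} (hD : IsClause D) (hx : x ≠ 0)
    (h : -x ∉ D) : IsClause (insert x D) := by
  refine ⟨?_, ?_⟩
  · simpa [hx.symm] using hD.1
  · intro y hy hy'
    rw [Finset.mem_insert] at hy hy'
    rcases hy with rfl | hy <;> rcases hy' with h' | h'
    · omega
    · exact h h'
    · exact h (by rwa [← h', neg_neg])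
    · exact hD.2 y hy h'

theorem isClauseSet_splitOn (hF : IsClauseSet F) (hS : S ⊆ F) (hv : v ∉ var F) (hv0 : v ≠ 0) :
    IsClauseSet (splitOn F S v) := by
  intro D hD
  rcases mem_splitOn.1 hD with ⟨h, -⟩ | ⟨A, hA, rfl⟩ | ⟨A, hA, rfl⟩
  · exact hF D h
  · exact (hF A (hS hA)).insert_of_notMem (by exact_mod_cast hv0) (not_mem_of_fresh hv (hS hA)).2
  · exact (hF A (hS hA)).insert_of_notMem (by simpa using hv0)
      (by simpa using (not_mem_of_fresh hv (hS hA)).1)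

theorem not_satisfiable_splitOn (h : ¬ Satisfiable F) : ¬ Satisfiable (splitOn F S v) := by
  rintro ⟨C, hC, hsat⟩
  refine h ⟨C, hC, fun D hD => ?_⟩
  by_cases hDS : D ∈ S
  · obtain ⟨x, hx⟩ := hsat (insert (v : ℤ) D) (mem_splitOn.2 (.inr (.inl ⟨D, hDS, rfl⟩)))
    obtain ⟨y, hy⟩ := hsat (insert (-(v : ℤ)) D) (mem_splitOn.2 (.inr (.inr ⟨D, hDS, rfl⟩)))
    rw [Finset.mem_inter, Finset.mem_insert] at hx hy
    rcases hx with ⟨hxC, rfl | hx⟩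
    · rcases hy with ⟨hyC, rfl | hy⟩
      · exact absurd hyC (hC.2 _ hxC)
      · exact ⟨y, Finset.mem_inter.2 ⟨hyC, hy⟩⟩
    · exact ⟨x, Finset.mem_inter.2 ⟨hxC, hx⟩⟩
  · exact hsat D (mem_splitOn.2 (.inl ⟨hD, hDS⟩))

theorem hitting_splitOn (hF : Hitting F) (hS : S ⊆ F) : Hitting (splitOn F S v) := by
  have key : ∀ {A B A' B' : Finset ℤ}, A ∈ F → B ∈ F → A ≠ B → A ⊆ A' → B ⊆ B' →
      ∃ x ∈ A', -x ∈ B' := by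
    intro A B A' B' hA hB hne hAA hBB
    obtain ⟨x, hx, hx'⟩ := hF A hA B hB hne
    exact ⟨x, hAA hx, hBB hx'⟩
  intro C hC D hD hne
  rcases mem_splitOn.1 hC with ⟨hC, hCS⟩ | ⟨A, hA, rfl⟩ | ⟨A, hA, rfl⟩ <;>
    rcases mem_splitOn.1 hD with ⟨hD, hDS⟩ | ⟨B, hB, rfl⟩ | ⟨B, hB, rfl⟩
  · exact hF C hC D hD hne
  · exact key hC (hS hB) (by rintro rfl; exact hCS hB) subset_rfl (Finset.subset_insert _ _)
  · exact key hC (hS hB) (by rintro rfl; exact hCS hB) subset_rfl (Finset.subset_insert _ _)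
  · exact key (hS hA) hD (by rintro rfl; exact hDS hA) (Finset.subset_insert _ _) subset_rfl
  · exact key (hS hA) (hS hB) (by rintro rfl; exact hne rfl) (Finset.subset_insert _ _)
      (Finset.subset_insert _ _)
  · exact ⟨v, Finset.mem_insert_self _ _, Finset.mem_insert_self _ _⟩
  · exact key (hS hA) hD (by rintro rfl; exact hDS hA) (Finset.subset_insert _ _) subset_rfl
  · exact ⟨-v, Finset.mem_insert_self _ _, by simp⟩
  · exact key (hS hA) (hS hB) (by rintro rfl; exact hne rfl) (Finset.subset_insert _ _)
      (Finset.subset_insert _ _)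

theorem card_image_insert_union (hS : S ⊆ F) (hv : v ∉ var F) (hv0 : v ≠ 0) :
    (S.image (insert (v : ℤ)) ∪ S.image (insert (-(v : ℤ)))).card = 2 * S.card := by
  have inj : ∀ x : ℤ, (∀ A ∈ S, x ∉ A) → (S.image (insert x)).card = S.card := by
    intro x hx
    refine Finset.card_image_of_injOn fun A hA B hB h => ?_
    rw [← Finset.erase_insert (hx A hA), ← Finset.erase_insert (hx B hB)]
    exact congrArg (Finset.erase · x) h
  rw [Finset.card_union_of_disjoint, inj _ fun A hA => (not_mem_of_fresh hv (hS hA)).1,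
    inj _ fun A hA => (not_mem_of_fresh hv (hS hA)).2, two_mul]
  rw [Finset.disjoint_left]
  intro D hD hD'
  obtain ⟨A, hA, rfl⟩ := Finset.mem_image.1 hD
  obtain ⟨B, hB, h⟩ := Finset.mem_image.1 hD'
  have : (v : ℤ) ∈ insert (-(v : ℤ)) B := h ▸ Finset.mem_insert_self _ _
  rcases Finset.mem_insert.1 this with h | h
  · omega
  · exact (not_mem_of_fresh hv (hS hB)).1 h

theorem card_splitOn (hS : S ⊆ F) (hv : v ∉ var F) (hv0 : v ≠ 0) :
    (splitOn F S v).card = F.card + S.card := by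
  rw [splitOn, Finset.card_union_of_disjoint, card_image_insert_union hS hv hv0,
    Finset.card_sdiff_of_subset hS]
  · have := Finset.card_le_card hS
    omega
  · rw [Finset.disjoint_left]
    intro D hD hD'
    have hDF := not_mem_of_fresh hv (Finset.mem_sdiff.1 hD).1
    rcases Finset.mem_union.1 hD' with h | h <;> obtain ⟨A, hA, rfl⟩ := Finset.mem_image.1 h <;>
      simp at hDF

theorem var_splitOn (hS : S ⊆ F) (hS0 : S.Nonempty) :
    var (splitOn F S v) = insert v (var F) := by
  ext n
  rw [Finset.mem_insert, mem_var, mem_var]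
  constructor
  · rintro ⟨D, hD, hn⟩
    rcases mem_splitOn.1 hD with ⟨hD, -⟩ | ⟨A, hA, rfl⟩ | ⟨A, hA, rfl⟩
    · exact .inr ⟨D, hD, hn⟩
    all_goals
      rw [clauseVar_insert, Finset.mem_insert] at hn
      rcases hn with hn | hn
      · left; simpa using hn
      · exact .inr ⟨A, hS hA, hn⟩
  · have mem : ∀ A ∈ S, insert (v : ℤ) A ∈ splitOn F S v := fun A hA =>
      mem_splitOn.2 (.inr (.inl ⟨A, hA, rfl⟩))
    rintro (rfl | ⟨D, hD, hn⟩)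
    · obtain ⟨A, hA⟩ := hS0
      exact ⟨_, mem A hA, by simp [clauseVar_insert]⟩
    · by_cases hDS : D ∈ S
      · exact ⟨_, mem D hDS, by simp [clauseVar_insert, hn]⟩
      · exact ⟨D, mem_splitOn.2 (.inl ⟨hD, hDS⟩), hn⟩

theorem deficiency_splitOn (hS : S ⊆ F) (hS0 : S.Nonempty) (hv : v ∉ var F) (hv0 : v ≠ 0) :
    deficiency (splitOn F S v) = deficiency F + S.card - 1 := by
  simp only [deficiency, numVar, card_splitOn hS hv hv0, var_splitOn hS hS0,
    Finset.card_insert_of_notMem hv]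
  push_cast
  ring

theorem nfc_splitOn (hS : S ⊆ F.filter fun C => clauseVar C = var F) (hS0 : S.Nonempty)
    (hv : v ∉ var F) (hv0 : v ≠ 0) : nfc (splitOn F S v) = 2 * S.card := by
  have hSF : S ⊆ F := hS.trans (Finset.filter_subset _ _)
  rw [← card_image_insert_union hSF hv hv0, nfc, var_splitOn hSF hS0]
  congr 1
  ext D
  rw [Finset.mem_filter]
  constructor
  · rintro ⟨hD, hfull⟩
    rcases Finset.mem_union.1 hD with hD | hD
    · refine absurd (mem_var.2 ⟨D, (Finset.mem_sdiff.1 hD).1, ?_⟩) hv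
      rw [hfull]
      exact Finset.mem_insert_self _ _
    · exact hD
  · intro hD
    refine ⟨Finset.mem_union_right _ hD, ?_⟩
    rcases Finset.mem_union.1 hD with h | h <;> obtain ⟨A, hA, rfl⟩ := Finset.mem_image.1 h <;>
      simp [clauseVar_insert, (Finset.mem_filter.1 (hS hA)).2]

end Split

theorem exists_split {F : Finset (Finset ℤ)} (hF : IsClauseSet F) (hu : ¬ Satisfiable F)
    (hh : Hitting F) {m : ℕ} (hm : 1 ≤ m) (hmF : m ≤ nfc F) :
    ∃ G : Finset (Finset ℤ), IsClauseSet G ∧ ¬ Satisfiable G ∧ Hitting G ∧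
      deficiency G = deficiency F + m - 1 ∧ nfc G = 2 * m := by
  obtain ⟨S, hS, rfl⟩ := Finset.exists_subset_card_eq hmF
  have hS0 : S.Nonempty := Finset.card_pos.1 hm
  have hSF : S ⊆ F := hS.trans (Finset.filter_subset _ _)
  obtain ⟨v, hv⟩ := Infinite.exists_notMem_finset (insert 0 (var F))
  rw [Finset.mem_insert, not_or] at hv
  obtain ⟨hv0, hv⟩ := hv
  exact ⟨splitOn F S v, isClauseSet_splitOn hF hSF hv hv0, not_satisfiable_splitOn hu,
    hitting_splitOn hh hSF, deficiency_splitOn hSF hS0 hv hv0, nfc_splitOn hS hS0 hv hv0⟩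

theorem two_pow_dvd_factorial_iff {k n : ℕ} :
    2 ^ k ∣ n.factorial ↔ k ≤ padicValNat 2 n.factorial :=
  padicValNat_dvd_iff_le n.factorial_ne_zero

theorem two_pow_dvd_factorial_S2 (k : ℕ) : 2 ^ k ∣ (S2 k).factorial :=
  Nat.sInf_mem (s := {n : ℕ | 2 ^ k ∣ n.factorial})
    ⟨2 ^ k, Nat.dvd_factorial (by positivity) le_rfl⟩

theorem S2_le_of_dvd {k n : ℕ} (h : 2 ^ k ∣ n.factorial) : S2 k ≤ n := Nat.sInf_le h

theorem even_S2 (k : ℕ) : Even (S2 k) := by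
  by_contra h
  obtain ⟨j, hj⟩ := Nat.not_even_iff_odd.1 h
  have hd := two_pow_dvd_factorial_S2 k
  rw [hj, Nat.factorial_succ] at hd
  have hc : Nat.Coprime (2 ^ k) (2 * j + 1) :=
    Nat.Coprime.pow_left k ((Nat.coprime_two_left).2 ⟨j, rfl⟩)
  have := S2_le_of_dvd (hc.dvd_of_dvd_mul_left hd)
  omega

/-- Half of `S₂(k)` is at most `S₂` at a smaller argument. -/
theorem exists_S2_eq_two_mul {k : ℕ} (hk : 2 ≤ k) :
    ∃ m l : ℕ, S2 k = 2 * m ∧ 2 ≤ m ∧ 1 ≤ l ∧ l + m = k + 1 ∧ m ≤ S2 l := by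
  obtain ⟨m, hm⟩ := even_iff_two_dvd.1 (even_S2 k)
  have hd := two_pow_dvd_factorial_S2 k
  have hm2 : 2 ≤ m := by
    by_contra! hlt
    have h4 : 4 ∣ (S2 k).factorial := (pow_dvd_pow 2 hk).trans hd
    rw [hm] at h4
    interval_cases m <;> revert h4 <;> decide
  have hlt : padicValNat 2 (m - 1).factorial + (m - 1) < k := by
    rw [← padicValNat_factorial_mul]
    by_contra! h
    have := S2_le_of_dvd (two_pow_dvd_factorial_iff.2 h)
    omega
  refine ⟨m, k + 1 - m, hm, hm2, by omega, by omega, ?_⟩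
  by_contra! h
  have h1 := (two_pow_dvd_factorial_S2 (k + 1 - m)).trans
    (Nat.factorial_dvd_factorial (show S2 (k + 1 - m) ≤ m - 1 by omega))
  have := two_pow_dvd_factorial_iff.1 h1
  omega

theorem S2_one : S2 1 = 2 := by
  refine le_antisymm (S2_le_of_dvd (by decide)) ?_
  by_contra! h
  have hd := two_pow_dvd_factorial_S2 1
  interval_cases S2 1 <;> revert hd <;> decide

theorem exists_hitting_nfc_eq_S2 (k : ℕ) (hk : 1 ≤ k) :
    ∃ F : Finset (Finset ℤ), IsClauseSet F ∧ ¬ Satisfiable F ∧ Hitting F ∧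
      deficiency F = (k : ℤ) ∧ nfc F = S2 k := by
  induction k using Nat.strong_induction_on with
  | _ k ih =>
    rcases hk.eq_or_lt with rfl | hk
    · have hF : IsClauseSet {∅} := by simp [IsClauseSet, IsClause]
      have hu : ¬ Satisfiable {∅} := by simp [Satisfiable]
      have hh : Hitting {∅} := by simp [Hitting]
      have hn : nfc {∅} = 1 := by decide
      obtain ⟨G, h1, h2, h3, h4, h5⟩ := exists_split hF hu hh le_rfl hn.ge
      refine ⟨G, h1, h2, h3, ?_, by rw [h5, S2_one]⟩
      rw [h4]
      decide
    · obtain ⟨m, l, hm, hm2, hl, hlm, hml⟩ := exists_S2_eq_two_mul hk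
      obtain ⟨F, hF, hu, hh, hd, hn⟩ := ih l (by omega) hl
      obtain ⟨G, h1, h2, h3, h4, h5⟩ := exists_split hF hu hh (by omega) (hml.trans hn.ge)
      exact ⟨G, h1, h2, h3, by omega, by omega⟩

section Bound

variable {F : Finset (Finset ℤ)}

/-- Flipping one literal `x` of a full clause leads to a clause of `F` containing `-x`. -/
theorem exists_neighbour (hF : IsClauseSet F) (hu : ¬ Satisfiable F) (hh : Hitting F)
    {C : Finset ℤ} (hC : C ∈ F) (hfull : clauseVar C = var F) {x : ℤ} (hx : x ∈ C) :
    ∃ D ∈ F, -x ∈ D ∧ ∀ y ∈ D, y = -x ∨ y ∈ C := by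
  have hcl := hF C hC
  have hx0 : x ≠ 0 := fun h => hcl.1 (h ▸ hx)
  have hE : IsClause (insert x ((C.erase x).image (-·))) := by
    refine IsClause.insert_of_notMem ⟨by simpa using fun _ => hcl.1, ?_⟩ hx0 (by simp)
    intro y hy hy'
    simp only [Finset.mem_image, Finset.mem_erase] at hy hy'
    obtain ⟨a, ⟨-, ha⟩, rfl⟩ := hy
    obtain ⟨b, ⟨-, hb⟩, hab⟩ := hy'
    exact hcl.2 b hb (by simpa [hab] using ha)
  obtain ⟨D, hD, hDE⟩ : ∃ D ∈ F, ∀ y ∈ D, y ∉ insert x ((C.erase x).image (-·)) := by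
    by_contra! h
    refine hu ⟨_, hE, fun D hD => ?_⟩
    obtain ⟨y, hy, hy'⟩ := h D hD
    exact ⟨y, Finset.mem_inter.2 ⟨hy', hy⟩⟩
  have hsub : ∀ y ∈ D, y = -x ∨ y ∈ C := by
    intro y hy
    have hyv : y.natAbs ∈ clauseVar C := by
      rw [hfull]
      exact mem_var.2 ⟨D, hD, natAbs_mem_clauseVar.2 (.inl hy)⟩
    rcases natAbs_mem_clauseVar.1 hyv with h | h
    · exact .inr h
    · left
      by_contra hne
      refine hDE y hy (Finset.mem_insert_of_mem (Finset.mem_image.2 ⟨-y, ?_, neg_neg y⟩))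
      exact Finset.mem_erase.2 ⟨fun h => hne (by omega), h⟩
  refine ⟨D, hD, ?_, hsub⟩
  by_contra hxD
  have hDC : D ⊆ C := fun y hy => (hsub y hy).resolve_left (by rintro rfl; exact hxD hy)
  have hne : D ≠ C := by
    rintro rfl
    exact hDE x hx (Finset.mem_insert_self _ _)
  obtain ⟨z, hz, hz'⟩ := hh D hD C hC hne
  exact hcl.2 z (hDC hz) hz'

theorem card_filter_neg_mem_le (hF : IsClauseSet F) (hu : ¬ Satisfiable F) (hh : Hitting F)
    {C : Finset ℤ} (hC : C ∈ F) (hfull : clauseVar C = var F) {x : ℤ} (hx : x ∈ C) :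
    ((F.filter fun D => -x ∈ D).card : ℤ) ≤ deficiency F := by
  have hcl := hF C hC
  choose! N hNF hNx hN using
    fun y (hy : y ∈ C) => exists_neighbour hF hu hh hC hfull hy
  have hcard : C.card ≤ (F.filter fun D => ¬ -x ∈ D).card := by
    refine Finset.card_le_card_of_injOn (fun y => if y = x then C else N y) ?_ ?_
    · intro y hy
      simp only [Finset.coe_filter, Set.mem_ofPred_eq]
      split_ifs with h
      · exact ⟨hC, hcl.2 x hx⟩
      · refine ⟨hNF y hy, fun hm => ?_⟩
        rcases hN y hy _ hm with h' | h'
        · omega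
        · exact hcl.2 x hx h'
    · have hNC : ∀ y ∈ C, C ≠ N y := fun y hy h => hcl.2 y hy (h ▸ hNx y hy)
      intro y hy z hz h
      dsimp only at h
      split_ifs at h with h1 h2 h2
      · rw [h1, h2]
      · exact absurd h (hNC z hz)
      · exact absurd h.symm (hNC y hy)
      · have hm := hNx y hy
        rw [h] at hm
        rcases hN z hz _ hm with h' | h'
        · omega
        · exact absurd h' (hcl.2 y hy)
  have hn : numVar F = C.card := by rw [numVar, ← hfull, hcl.card_clauseVar]
  have := Finset.card_filter_add_card_filter_not (s := F) (fun D => -x ∈ D)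
  rw [deficiency, hn]
  omega

theorem nfc_le (hF : IsClauseSet F) (hu : ¬ Satisfiable F) (hh : Hitting F) :
    (nfc F : ℤ) ≤ max 1 (2 * deficiency F) := by
  by_cases h1 : nfc F ≤ 1
  · exact le_max_of_le_left (by exact_mod_cast h1)
  refine le_max_of_le_right ?_
  obtain ⟨A, hA, B, hB, hne⟩ := Finset.one_lt_card.1 (not_le.1 h1)
  rw [Finset.mem_filter] at hA hB
  obtain ⟨x, hxA, hxB⟩ := hh A hA.1 B hB.1 hne
  have hpos := card_filter_neg_mem_le hF hu hh hA.1 hA.2 hxA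
  have hneg := card_filter_neg_mem_le hF hu hh hB.1 hB.2 hxB
  rw [neg_neg] at hneg
  have hle : nfc F ≤ (F.filter fun D => -x ∈ D).card + (F.filter fun D => x ∈ D).card := by
    refine (Finset.card_le_card ?_).trans (Finset.card_union_le _ _)
    intro D hD
    obtain ⟨hDF, hD⟩ := Finset.mem_filter.1 hD
    have hxD : x.natAbs ∈ clauseVar D := by
      rw [hD, ← hA.2]
      exact natAbs_mem_clauseVar.2 (.inl hxA)
    rcases natAbs_mem_clauseVar.1 hxD with h | h
    · exact Finset.mem_union_right _ (Finset.mem_filter.2 ⟨hDF, h⟩)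
    · exact Finset.mem_union_left _ (Finset.mem_filter.2 ⟨hDF, h⟩)
  omega

end Bound

theorem stmt_16 : ∀ k : ℕ, 1 ≤ k →
    (∃ F : Finset (Finset ℤ), IsClauseSet F ∧ ¬ Satisfiable F ∧ Hitting F ∧
      deficiency F = (k : ℤ) ∧ nfc F = S2 k) ∧
    S2 k ≤ sSup {m : ℕ | ∃ F : Finset (Finset ℤ), IsClauseSet F ∧ ¬ Satisfiable F ∧
      Hitting F ∧ deficiency F = (k : ℤ) ∧ nfc F = m} := by
  intro k hk
  have hex := exists_hitting_nfc_eq_S2 k hk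
  refine ⟨hex, le_csSup ⟨2 * k, ?_⟩ hex⟩
  rintro m ⟨F, hF, hu, hh, hd, rfl⟩
  have := nfc_le hF hu hh
  omega
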